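/- arXiv:1909.12237 — 4 statements merged into one kernel-verified Lean document; each statement's English description precedes it below -/
import Mathlib

section
/- Consider a Bayesian model with prior density π0(θ) on ℝ^d and sampling density π(s∣θ) on ℝ^p, and an additive perturbation mechanism with noise density η on ℝ^p (bounded, with 0 < sup η < ∞) and bandwidth h > 0, so that the privatized query s_obs has conditional density η((s_obs − s)/h) given the noiseless query s. Let (θ, s, I) be jointly distributed so that θ has density π0, s given θ has density π(s∣θ), and given (θ, s) the acceptance indicator I is Bernoulli with success probability c·η((s_obs − s)/h), where c = (sup_u η(u))^{-1}. Assume P(I = 1) > 0 and that the denominator ∫∫ π0(θ) η((s_obs − s)/h) π(s∣θ) ds dθ is finite and positive. Then the conditional distribution of θ given I = 1 has density (with respect to Lebesgue measure on ℝ^d) equal to the true posterior π(θ∣s_obs) = π0(θ) ∫ η((s_obs − s)/h) π(s∣θ) ds / ∫∫ π0(θ') η((s_obs − s)/h) π(s∣θ') ds dθ'. -/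
open MeasureTheory

/-- **Rejection ABC with differentially private queries yields exact posterior samples.**
Given a prior density `π0` on `ℝ^d`, a sampling density `π(s∣θ)` on `ℝ^p`, an additive
perturbation mechanism with bounded noise density `η` and bandwidth `h > 0`, and observed
privatized query `sobs`, suppose `(θ, s, I)` are jointly distributed so that `(θ, s)` has
joint density `π0(θ)π(s∣θ)` and, given `(θ, s)`, the indicator `I` is Bernoulli with success
probability `c·η((sobs − s)/h)` where `c = (sup η)⁻¹`.  If `P(I = 1) > 0` and the normalizing
integral is finite and positive, then the conditional distribution of `θ` given `I = 1` has
density equal to the true posterior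
`π(θ∣sobs) = π0(θ) ∫ η((sobs − s)/h) π(s∣θ) ds / ∫∫ π0(θ') η((sobs − s)/h) π(s∣θ') ds dθ'`. -/
theorem rejection_abc_exact_posterior
    {d p : ℕ} {Ω : Type*} [MeasurableSpace Ω] (μ : Measure Ω) [IsProbabilityMeasure μ]
    (π0 : (Fin d → ℝ) → ℝ) (π : (Fin d → ℝ) → (Fin p → ℝ) → ℝ)
    (η : (Fin p → ℝ) → ℝ) (h : ℝ) (sobs : Fin p → ℝ)
    -- measurability and nonnegativity of the densities
    (hπ0_meas : Measurable π0) (hπ0_nonneg : ∀ t, 0 ≤ π0 t)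
    (hπ0_prob : ∫ t, π0 t = 1)
    (hπ_meas : Measurable (Function.uncurry π)) (hπ_nonneg : ∀ t s, 0 ≤ π t s)
    (hπ_prob : ∀ t, ∫ s, π t s = 1)
    (hη_meas : Measurable η) (hη_nonneg : ∀ u, 0 ≤ η u) (hη_prob : ∫ u, η u = 1)
    -- the noise density is bounded with `0 < sup η < ∞`
    (hη_bdd : BddAbove (Set.range η)) (hη_sup_pos : 0 < ⨆ u, η u)
    (hh : 0 < h)
    -- the acceptance constant
    (c : ℝ) (hc : c = (⨆ u, η u)⁻¹)
    -- random elements: the parameter, the simulated query, and the acceptance indicator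
    (θ : Ω → (Fin d → ℝ)) (s : Ω → (Fin p → ℝ)) (I : Ω → Bool)
    (hθ_meas : Measurable θ) (hs_meas : Measurable s) (hI_meas : Measurable I)
    -- `(θ, s)` has joint density `π0(θ)π(s∣θ)` w.r.t. Lebesgue measure
    (h_joint : ∀ A : Set ((Fin d → ℝ) × (Fin p → ℝ)), MeasurableSet A →
      μ {ω | (θ ω, s ω) ∈ A} = ENNReal.ofReal (∫ x in A, π0 x.1 * π x.1 x.2))
    -- given `(θ, s)`, `I` is Bernoulli with success probability `c·η((sobs − s)/h)`
    (h_accept : ∀ A : Set ((Fin d → ℝ) × (Fin p → ℝ)), MeasurableSet A →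
      μ {ω | (θ ω, s ω) ∈ A ∧ I ω = true} =
        ENNReal.ofReal (∫ x in A, π0 x.1 * π x.1 x.2 * (c * η (h⁻¹ • (sobs - x.2)))))
    -- overall acceptance probability is positive
    (h_acc_pos : 0 < μ {ω | I ω = true})
    -- the normalizing constant `∫∫ π0(θ) η((sobs − s)/h) π(s∣θ) ds dθ` is finite and positive
    (h_int : Integrable (fun x : (Fin d → ℝ) × (Fin p → ℝ) =>
      π0 x.1 * η (h⁻¹ • (sobs - x.2)) * π x.1 x.2))
    (h_pos : 0 < ∫ x : (Fin d → ℝ) × (Fin p → ℝ), π0 x.1 * η (h⁻¹ • (sobs - x.2)) * π x.1 x.2) :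
    ∀ B : Set (Fin d → ℝ), MeasurableSet B →
      μ {ω | θ ω ∈ B ∧ I ω = true} / μ {ω | I ω = true} =
        ENNReal.ofReal (∫ t in B,
          π0 t * (∫ u, η (h⁻¹ • (sobs - u)) * π t u) /
            ∫ x : (Fin d → ℝ) × (Fin p → ℝ), π0 x.1 * η (h⁻¹ • (sobs - x.2)) * π x.1 x.2) := by
  intro B hB
  have hc0 : 0 < c := by rw [hc]; exact inv_pos.mpr hη_sup_pos
  set g : (Fin d → ℝ) × (Fin p → ℝ) → ℝ :=
    fun x => π0 x.1 * η (h⁻¹ • (sobs - x.2)) * π x.1 x.2 with hg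
  set Z : ℝ := ∫ x, g x with hZ
  have hZpos : 0 < Z := h_pos
  have key : ∀ A : Set ((Fin d → ℝ) × (Fin p → ℝ)),
      (∫ x in A, π0 x.1 * π x.1 x.2 * (c * η (h⁻¹ • (sobs - x.2)))) = c * ∫ x in A, g x := by
    intro A
    rw [← integral_const_mul]
    congr 1
    funext x
    simp only [hg]
    ring
  have h1 : μ {ω | θ ω ∈ B ∧ I ω = true} = ENNReal.ofReal (c * ∫ x in B ×ˢ Set.univ, g x) := by
    rw [← key, ← h_accept _ (hB.prod MeasurableSet.univ)]
    simp
  have h2 : μ {ω | I ω = true} = ENNReal.ofReal (c * Z) := by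
    have := h_accept Set.univ MeasurableSet.univ
    rw [key, setIntegral_univ] at this
    rw [← this]
    simp
  have h3 : (∫ x in B ×ˢ Set.univ, g x)
      = ∫ t in B, π0 t * (∫ u, η (h⁻¹ • (sobs - u)) * π t u) := by
    have hi : IntegrableOn g (B ×ˢ Set.univ)
        ((volume : Measure (Fin d → ℝ)).prod (volume : Measure (Fin p → ℝ))) := by
      rw [← Measure.volume_eq_prod]
      exact h_int.integrableOn
    rw [Measure.volume_eq_prod, setIntegral_prod g hi]
    congr 1
    funext t
    rw [setIntegral_univ, ← integral_const_mul]
    congr 1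
    funext u
    simp only [hg]
    ring
  rw [h1, h2, integral_div, ← h3, ← ENNReal.ofReal_div_of_pos (mul_pos hc0 hZpos),
    mul_div_mul_left _ _ hc0.ne']
end

section
/- Consider a Bayesian model with prior density π0(θ) on ℝ^d and sampling density π(s∣θ) on ℝ^p, and a general perturbation mechanism with conditional density η_obs(s_obs∣s) of the privatized query given the noiseless query s, which does not depend on θ. Assume 0 < C := sup_s η_obs(s_obs∣s) < ∞ for the fixed observed value s_obs. Let (θ, s, I) be jointly distributed so that θ has density π0, s given θ has density π(s∣θ), and given (θ, s) the acceptance indicator I is Bernoulli with success probability C^{-1}·η_obs(s_obs∣s). Assume P(I = 1) > 0 and that ∫∫ π0(θ) η_obs(s_obs∣s) π(s∣θ) ds dθ is finite and positive. Then the conditional distribution of θ given I = 1 has density equal to the true posterior π(θ∣s_obs) = π0(θ) ∫ η_obs(s_obs∣s) π(s∣θ) ds / ∫∫ π0(θ') η_obs(s_obs∣s) π(s∣θ') ds dθ'. -/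
open MeasureTheory

/-- **Rejection ABC is exact for a general (not necessarily additive) perturbation mechanism.**
Given a prior density `π0` on `ℝ^d`, a sampling density `π(s∣θ)` on `ℝ^p`, and a perturbation
mechanism with conditional density `ηobs(sobs∣s)` (not depending on `θ`) satisfying
`0 < C := sup_s ηobs(sobs∣s) < ∞`, suppose `(θ, s, I)` are jointly distributed so that `(θ, s)`
has joint density `π0(θ)π(s∣θ)` and, given `(θ, s)`, the indicator `I` is Bernoulli with success
probability `C⁻¹·ηobs(sobs∣s)`.  If `P(I = 1) > 0` and the normalizing integral is finite and
positive, then the conditional distribution of `θ` given `I = 1` has density equal to the true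
posterior `π(θ∣sobs) = π0(θ) ∫ ηobs(sobs∣s) π(s∣θ) ds / ∫∫ π0(θ') ηobs(sobs∣s) π(s∣θ') ds dθ'`. -/
theorem rejection_abc_exact_posterior_general_mechanism
    {d p : ℕ} {Ω : Type*} [MeasurableSpace Ω] (μ : Measure Ω) [IsProbabilityMeasure μ]
    (π0 : (Fin d → ℝ) → ℝ) (π : (Fin d → ℝ) → (Fin p → ℝ) → ℝ)
    (ηobs : (Fin p → ℝ) → (Fin p → ℝ) → ℝ) (sobs : Fin p → ℝ)
    -- measurability and nonnegativity of the densities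
    (hπ0_meas : Measurable π0) (hπ0_nonneg : ∀ t, 0 ≤ π0 t)
    (hπ0_prob : ∫ t, π0 t = 1)
    (hπ_meas : Measurable (Function.uncurry π)) (hπ_nonneg : ∀ t s, 0 ≤ π t s)
    (hπ_prob : ∀ t, ∫ s, π t s = 1)
    -- `ηobs(·∣s)` is for each `s` a probability density, evaluated here at the fixed `sobs`
    (hη_meas : Measurable (Function.uncurry ηobs)) (hη_nonneg : ∀ r s, 0 ≤ ηobs r s)
    (hη_prob : ∀ s, ∫ r, ηobs r s = 1)
    -- `0 < C := sup_s ηobs(sobs∣s) < ∞`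
    (hη_bdd : BddAbove (Set.range fun s => ηobs sobs s))
    (hC_pos : 0 < ⨆ s, ηobs sobs s)
    -- the acceptance constant
    (C : ℝ) (hC : C = ⨆ s, ηobs sobs s)
    -- random elements: the parameter, the simulated query, and the acceptance indicator
    (θ : Ω → (Fin d → ℝ)) (s : Ω → (Fin p → ℝ)) (I : Ω → Bool)
    (hθ_meas : Measurable θ) (hs_meas : Measurable s) (hI_meas : Measurable I)
    -- `(θ, s)` has joint density `π0(θ)π(s∣θ)` w.r.t. Lebesgue measure
    (h_joint : ∀ A : Set ((Fin d → ℝ) × (Fin p → ℝ)), MeasurableSet A →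
      μ {ω | (θ ω, s ω) ∈ A} = ENNReal.ofReal (∫ x in A, π0 x.1 * π x.1 x.2))
    -- given `(θ, s)`, `I` is Bernoulli with success probability `C⁻¹·ηobs(sobs∣s)`
    (h_accept : ∀ A : Set ((Fin d → ℝ) × (Fin p → ℝ)), MeasurableSet A →
      μ {ω | (θ ω, s ω) ∈ A ∧ I ω = true} =
        ENNReal.ofReal (∫ x in A, π0 x.1 * π x.1 x.2 * (C⁻¹ * ηobs sobs x.2)))
    -- overall acceptance probability is positive
    (h_acc_pos : 0 < μ {ω | I ω = true})
    -- the normalizing constant `∫∫ π0(θ) ηobs(sobs∣s) π(s∣θ) ds dθ` is finite and positive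
    (h_int : Integrable (fun x : (Fin d → ℝ) × (Fin p → ℝ) =>
      π0 x.1 * ηobs sobs x.2 * π x.1 x.2))
    (h_pos : 0 < ∫ x : (Fin d → ℝ) × (Fin p → ℝ), π0 x.1 * ηobs sobs x.2 * π x.1 x.2) :
    ∀ B : Set (Fin d → ℝ), MeasurableSet B →
      μ {ω | θ ω ∈ B ∧ I ω = true} / μ {ω | I ω = true} =
        ENNReal.ofReal (∫ t in B,
          π0 t * (∫ u, ηobs sobs u * π t u) /
            ∫ x : (Fin d → ℝ) × (Fin p → ℝ), π0 x.1 * ηobs sobs x.2 * π x.1 x.2) := by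
  intro B hB
  have hCp : 0 < C := hC ▸ hC_pos
  have key : ∀ A : Set ((Fin d → ℝ) × (Fin p → ℝ)),
      (∫ x in A, π0 x.1 * π x.1 x.2 * (C⁻¹ * ηobs sobs x.2)) =
        C⁻¹ * ∫ x in A, π0 x.1 * ηobs sobs x.2 * π x.1 x.2 := by
    intro A
    rw [← integral_const_mul]
    congr 1
    funext x
    ring
  have h1 := h_accept (B ×ˢ Set.univ) (hB.prod MeasurableSet.univ)
  have h2 := h_accept Set.univ MeasurableSet.univ
  rw [key] at h1 h2
  simp only [Set.mem_prod, Set.mem_univ, and_true, true_and, Measure.restrict_univ] at h1 h2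
  have h3 : (∫ x in B ×ˢ (Set.univ : Set (Fin p → ℝ)), π0 x.1 * ηobs sobs x.2 * π x.1 x.2) =
      ∫ t in B, π0 t * ∫ u, ηobs sobs u * π t u := by
    rw [Measure.volume_eq_prod, setIntegral_prod]
    · simp only [Measure.restrict_univ, mul_assoc, integral_const_mul]
    · exact h_int.integrableOn
  rw [h1, h2, h3, ← ENNReal.ofReal_div_of_pos (by positivity), integral_div,
    mul_div_mul_left _ _ (by positivity)]
end

section
/- Let θ > 0, ε > 0, and let s_obs > 0 be a real number with n = ⌈s_obs⌉ (the least integer ≥ s_obs). Then the Poisson–Laplace mixture series satisfies ∑_{k=0}^{∞} (θ^k / k!) · e^{−ε·|s_obs − k|} = e^{θ e^{ε} − ε s_obs} · Γ(n, θ e^{ε}) / Γ(n) + e^{θ e^{−ε} + ε s_obs} · γ(n, θ e^{−ε}) / Γ(n), where Γ(n, x) = ∫_x^∞ r^{n−1} e^{−r} dr is the upper incomplete Gamma function, Γ(n) = Γ(n, 0) = (n−1)!, and γ(n, x) = Γ(n) − Γ(n, x) is the lower incomplete Gamma function. -/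
open MeasureTheory

lemma plm_hasDerivAt (m : ℕ) (x : ℝ) :
    HasDerivAt (fun r : ℝ => -(Real.exp (-r) * ∑ k ∈ Finset.range (m + 1), r ^ k / (k.factorial : ℝ)))
      (x ^ m / (m.factorial : ℝ) * Real.exp (-x)) x := by
  have he : HasDerivAt (fun r : ℝ => Real.exp (-r)) (-Real.exp (-x)) x := by
    simpa using (hasDerivAt_neg x).exp
  induction m with
  | zero => simpa using he.fun_neg
  | succ m ih =>
    have h2 := (he.mul ((hasDerivAt_pow (m + 1) x).div_const ((m + 1).factorial : ℝ)))
    refine ((ih.sub h2).congr_of_eventuallyEq (Filter.Eventually.of_forall fun r => ?_)).congr_deriv ?_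
    · simp only [Finset.sum_range_succ _ (m + 1), Pi.sub_apply, Pi.mul_apply]
      ring
    · have : (m.factorial : ℝ) ≠ 0 := by positivity
      have : (m : ℝ) + 1 ≠ 0 := by positivity
      simp only [Nat.factorial_succ, Nat.add_sub_cancel]
      push_cast
      field_simp
      ring

lemma plm_integral (m : ℕ) (x : ℝ) (hx : 0 < x) :
    ∫ r in Set.Ioi x, r ^ m * Real.exp (-r) =
      (m.factorial : ℝ) * (Real.exp (-x) * ∑ k ∈ Finset.range (m + 1), x ^ k / (k.factorial : ℝ)) := by
  have ht : Filter.Tendsto (fun r : ℝ => -(Real.exp (-r) * ∑ k ∈ Finset.range (m + 1),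
      r ^ k / (k.factorial : ℝ))) Filter.atTop (nhds 0) := by
    have : Filter.Tendsto (fun r : ℝ => ∑ k ∈ Finset.range (m + 1),
        r ^ k * Real.exp (-r) / (k.factorial : ℝ)) Filter.atTop
        (nhds (∑ k ∈ Finset.range (m + 1), 0 / (k.factorial : ℝ))) :=
      tendsto_finsetSum _ fun k _ =>
        (Real.tendsto_pow_mul_exp_neg_atTop_nhds_zero k).div_const _
    have h := this.neg
    simp only [zero_div, Finset.sum_const_zero, neg_zero] at h
    refine h.congr fun r => ?_
    rw [Finset.mul_sum]
    congr 1
    exact Finset.sum_congr rfl fun k _ => by ring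
  have h := integral_Ioi_of_hasDerivAt_of_nonneg' (a := x) (fun r _ => plm_hasDerivAt m r)
    (fun r hr => by
      have : 0 < r := hx.trans hr
      positivity) ht
  have hm : (m.factorial : ℝ) ≠ 0 := by positivity
  rw [zero_sub, neg_neg] at h
  rw [← h, ← integral_const_mul]
  congr 1
  funext r
  field_simp

/-- **The Poisson–Laplace mixture series in terms of incomplete Gamma functions.**
For `θ > 0`, `ε > 0` and `sobs > 0` with `n = ⌈sobs⌉`,
`∑_{k=0}^∞ (θ^k/k!)·e^{−ε|sobs − k|}
  = e^{θe^ε − ε·sobs}·Γ(n, θe^ε)/Γ(n) + e^{θe^{−ε} + ε·sobs}·γ(n, θe^{−ε})/Γ(n)`,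
where `Γ(n, x) = ∫_x^∞ r^{n−1}e^{−r} dr`, `Γ(n) = Γ(n, 0) = (n−1)!`, and
`γ(n, x) = Γ(n) − Γ(n, x)`. -/
theorem poisson_laplace_mixture_series
    (θ ε sobs : ℝ) (hθ : 0 < θ) (hε : 0 < ε) (hs : 0 < sobs)
    (n : ℕ) (hn : n = ⌈sobs⌉₊) :
    ∑' k : ℕ, θ ^ k / (Nat.factorial k : ℝ) * Real.exp (-ε * |sobs - (k : ℝ)|) =
      Real.exp (θ * Real.exp ε - ε * sobs) *
          (∫ r in Set.Ioi (θ * Real.exp ε), r ^ (n - 1) * Real.exp (-r)) /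
            (Nat.factorial (n - 1) : ℝ) +
        Real.exp (θ * Real.exp (-ε) + ε * sobs) *
          ((Nat.factorial (n - 1) : ℝ) -
              ∫ r in Set.Ioi (θ * Real.exp (-ε)), r ^ (n - 1) * Real.exp (-r)) /
            (Nat.factorial (n - 1) : ℝ) := by
  have hnpos : 0 < n := hn ▸ Nat.ceil_pos.mpr hs
  obtain ⟨m, rfl⟩ : ∃ m, n = m + 1 := ⟨n - 1, by omega⟩
  rw [Nat.add_sub_cancel, plm_integral m _ (by positivity), plm_integral m _ (by positivity)]
  set x := θ * Real.exp ε with hx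
  set y := θ * Real.exp (-ε) with hy
  have hm : (m.factorial : ℝ) ≠ 0 := by positivity
  have hA : ∀ k ∈ Finset.range (m + 1),
      θ ^ k / (Nat.factorial k : ℝ) * Real.exp (-ε * |sobs - (k : ℝ)|) =
        Real.exp (-ε * sobs) * (x ^ k / (k.factorial : ℝ)) := by
    intro k hk
    have hk' : (k : ℝ) < sobs := by
      rw [← Nat.lt_ceil, ← hn]; exact Finset.mem_range.mp hk
    rw [abs_of_pos (by linarith), hx, mul_pow, ← Real.exp_nat_mul,
      show -ε * (sobs - k) = -ε * sobs + k * ε by ring, Real.exp_add]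
    ring
  have hB : ∀ k ∉ Finset.range (m + 1),
      θ ^ k / (Nat.factorial k : ℝ) * Real.exp (-ε * |sobs - (k : ℝ)|) =
        Real.exp (ε * sobs) * (y ^ k / (k.factorial : ℝ)) := by
    intro k hk
    have hk' : sobs ≤ (k : ℝ) := by
      rw [← Nat.ceil_le, ← hn]; simpa using hk
    rw [abs_of_nonpos (by linarith), hy, mul_pow, ← Real.exp_nat_mul,
      show -ε * -(sobs - k) = ε * sobs + k * -ε by ring, Real.exp_add]
    ring
  have hy1 : HasSum (fun k : ℕ => Real.exp (ε * sobs) * (y ^ k / (k.factorial : ℝ)))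
      (Real.exp (ε * sobs) * Real.exp y) := by
    have := NormedSpace.expSeries_div_hasSum_exp y
    rw [← Real.exp_eq_exp_ℝ] at this
    exact this.mul_left _
  have hd := hasSum_sum_of_ne_finset_zero (L := SummationFilter.unconditional ℕ) (f := fun k : ℕ =>
      θ ^ k / (Nat.factorial k : ℝ) * Real.exp (-ε * |sobs - (k : ℝ)|) -
        Real.exp (ε * sobs) * (y ^ k / (k.factorial : ℝ))) (s := Finset.range (m + 1))
    (fun k hk => by simp only [hB k hk, sub_self])
  have hsum := hd.add hy1
  simp only [sub_add_cancel] at hsum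
  rw [hsum.tsum_eq, Finset.sum_sub_distrib, Finset.sum_congr rfl hA, ← Finset.mul_sum,
    ← Finset.mul_sum, show x - ε * sobs = x + -ε * sobs by ring, Real.exp_add, Real.exp_add,
    Real.exp_neg x, Real.exp_neg y]
  have := Real.exp_ne_zero x
  have := Real.exp_ne_zero y
  field_simp
  ring
end

section
/- Consider the Bayesian model in which θ > 0 has a Gamma(α, β) prior with density π0(θ) = β^α θ^{α−1} e^{−βθ}/Γ(α), the noiseless count query s given θ is Poisson(θ), and the privatized query is s_obs = s + ε^{−1}u with u a standard Laplace random variable (the ε-Laplace mechanism for a counting query with global sensitivity 1). Then for every observed s_obs > 0, the unnormalized posterior density of θ given s_obs, namely π0(θ) · ∑_{k=0}^{∞} (e^{−θ} θ^k / k!) · (ε/2) e^{−ε|s_obs − k|}, equals C · θ^{α−1} e^{−(β+1)θ} · [ (Γ(⌈s_obs⌉, θ e^{ε}) / Γ(⌈s_obs⌉)) · e^{θ e^{ε} − ε s_obs} + (γ(⌈s_obs⌉, θ e^{−ε}) / Γ(⌈s_obs⌉)) · e^{θ e^{−ε} + ε s_obs} ], where C = ε β^α / (2 Γ(α)) is a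 constant not depending on θ; in particular the posterior density of θ given s_obs is proportional to the bracketed expression times θ^{α−1} e^{−(β+1)θ}. -/
open MeasureTheory Real

/-- The derivative of the truncated exponential times `exp (-r)`. -/
lemma hasDerivAt_aux (m : ℕ) (r : ℝ) :
    HasDerivAt (fun r : ℝ => -(exp (-r) * ∑ k ∈ Finset.range (m + 1), r ^ k / (Nat.factorial k : ℝ)))
      (r ^ m * exp (-r) / (Nat.factorial m : ℝ)) r := by
  have he : HasDerivAt (fun r : ℝ => exp (-r)) (-exp (-r)) r := by
    simpa using (hasDerivAt_neg r).exp
  induction m with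
  | zero =>
    have h0 : HasDerivAt (fun r : ℝ => -exp (-r)) (-(-exp (-r))) r := he.neg
    simpa using h0
  | succ m ih =>
    have hp : HasDerivAt (fun r : ℝ => r ^ (m + 1) / (Nat.factorial (m + 1) : ℝ))
        (((m + 1 : ℕ) : ℝ) * r ^ m / (Nat.factorial (m + 1) : ℝ)) r := by
      simpa using (hasDerivAt_pow (m + 1) r).div_const (Nat.factorial (m + 1) : ℝ)
    have h2 := ih.sub (he.mul hp)
    have hfun : (fun r : ℝ => -(exp (-r) * ∑ k ∈ Finset.range (m + 1 + 1),
        r ^ k / (Nat.factorial k : ℝ))) = (fun r : ℝ => -(exp (-r) *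
        ∑ k ∈ Finset.range (m + 1), r ^ k / (Nat.factorial k : ℝ))) -
        (fun r : ℝ => exp (-r)) * (fun r : ℝ => r ^ (m + 1) / (Nat.factorial (m + 1) : ℝ)) := by
      funext x
      simp only [Pi.sub_apply, Pi.mul_apply]
      rw [Finset.sum_range_succ _ (m + 1)]
      ring
    rw [hfun]
    refine h2.congr_deriv ?_
    · have h1 : (Nat.factorial m : ℝ) ≠ 0 := by positivity
      have h3 : (m : ℝ) + 1 ≠ 0 := by positivity
      rw [Nat.factorial_succ]
      push_cast
      field_simp
      ring

/-- The upper incomplete Gamma function at a positive integer. -/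
lemma upper_gamma_aux (m : ℕ) (x : ℝ) (hx : 0 < x) :
    (∫ r in Set.Ioi x, r ^ m * exp (-r)) / (Nat.factorial m : ℝ) =
      exp (-x) * ∑ k ∈ Finset.range (m + 1), x ^ k / (Nat.factorial k : ℝ) := by
  rw [← integral_div]
  have ht : Filter.Tendsto
      (fun r : ℝ => -(exp (-r) * ∑ k ∈ Finset.range (m + 1), r ^ k / (Nat.factorial k : ℝ)))
      Filter.atTop (nhds 0) := by
    have : Filter.Tendsto
        (fun r : ℝ => ∑ k ∈ Finset.range (m + 1), (r ^ k * exp (-r)) / (Nat.factorial k : ℝ))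
        Filter.atTop (nhds (∑ k ∈ Finset.range (m + 1), (0 : ℝ) / (Nat.factorial k : ℝ))) :=
      tendsto_finsetSum _ fun k _ =>
        (Real.tendsto_pow_mul_exp_neg_atTop_nhds_zero k).div_const _
    have h2 := this.neg
    simp only [zero_div, Finset.sum_const_zero, neg_zero] at h2
    refine h2.congr fun r => ?_
    rw [Finset.mul_sum]
    congr 1
    exact Finset.sum_congr rfl fun k _ => by ring
  rw [integral_Ioi_of_hasDerivAt_of_nonneg' (fun r _ => hasDerivAt_aux m r) ?_ ht]
  · ring
  · intro r hr
    have : 0 < r := lt_trans hx hr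
    positivity

/-- **The posterior density in the Gamma–Poisson model under the ε-Laplace mechanism.**
With a `Gamma(α, β)` prior `π0(θ) = β^α θ^{α−1} e^{−βθ}/Γ(α)`, a Poisson(θ) noiseless count
query, and privatized query `sobs = s + ε⁻¹u` with `u` standard Laplace, the unnormalized
posterior density of `θ` given `sobs > 0` satisfies
`π0(θ) · ∑_{k=0}^∞ (e^{−θ}θ^k/k!)·(ε/2)e^{−ε|sobs − k|}
  = C · θ^{α−1} e^{−(β+1)θ} · [ (Γ(⌈sobs⌉, θe^ε)/Γ(⌈sobs⌉))·e^{θe^ε − ε·sobs}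
      + (γ(⌈sobs⌉, θe^{−ε})/Γ(⌈sobs⌉))·e^{θe^{−ε} + ε·sobs} ]`
with constant `C = εβ^α/(2Γ(α))` not depending on `θ`; in particular the posterior is
proportional to the bracketed expression times `θ^{α−1}e^{−(β+1)θ}`. -/
theorem gamma_poisson_laplace_posterior
    (α β ε sobs θ : ℝ) (hα : 0 < α) (hβ : 0 < β) (hε : 0 < ε) (hs : 0 < sobs)
    (hθ : 0 < θ) (n : ℕ) (hn : n = ⌈sobs⌉₊) (C : ℝ) (hC : C = ε * β ^ α / (2 * Gamma α)) :
    (β ^ α * θ ^ (α - 1) * exp (-β * θ) / Gamma α) *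
        ∑' k : ℕ, (exp (-θ) * θ ^ k / (Nat.factorial k : ℝ)) *
          ((ε / 2) * exp (-ε * |sobs - (k : ℝ)|)) =
      C * (θ ^ (α - 1) * exp (-(β + 1) * θ)) *
        (((∫ r in Set.Ioi (θ * exp ε), r ^ (n - 1) * exp (-r)) /
              (Nat.factorial (n - 1) : ℝ)) * exp (θ * exp ε - ε * sobs) +
          (((Nat.factorial (n - 1) : ℝ) -
                ∫ r in Set.Ioi (θ * exp (-ε)), r ^ (n - 1) * exp (-r)) /
              (Nat.factorial (n - 1) : ℝ)) * exp (θ * exp (-ε) + ε * sobs)) := by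
  obtain ⟨m, rfl⟩ : ∃ m, n = m + 1 :=
    Nat.exists_eq_succ_of_ne_zero (by rw [hn]; exact (Nat.ceil_pos.mpr hs).ne')
  simp only [Nat.add_sub_cancel]
  have hf : (Nat.factorial m : ℝ) ≠ 0 := by positivity
  rw [sub_div, div_self hf, upper_gamma_aux m _ (by positivity),
    upper_gamma_aux m _ (by positivity)]
  set x := θ * exp ε with hx
  set y := θ * exp (-ε) with hy
  have hexp : HasSum (fun k : ℕ => y ^ k / (Nat.factorial k : ℝ)) (exp y) := by
    rw [Real.exp_eq_exp_ℝ]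
    exact NormedSpace.expSeries_div_hasSum_exp y
  have htail : HasSum (fun k : ℕ => y ^ (k + (m + 1)) / (Nat.factorial (k + (m + 1)) : ℝ))
      (exp y - ∑ k ∈ Finset.range (m + 1), y ^ k / (Nat.factorial k : ℝ)) :=
    (hasSum_nat_add_iff' (f := fun k : ℕ => y ^ k / (Nat.factorial k : ℝ)) (m + 1)).mpr hexp
  set f : ℕ → ℝ := fun k => (exp (-θ) * θ ^ k / (Nat.factorial k : ℝ)) *
          ((ε / 2) * exp (-ε * |sobs - (k : ℝ)|)) with hfdef
  have hlow : ∀ k ∈ Finset.range (m + 1), f k =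
      (exp (-θ) * (ε / 2) * exp (-(ε * sobs))) * (x ^ k / (Nat.factorial k : ℝ)) := by
    intro k hk
    have hk' : (k : ℝ) < sobs := by
      rw [← Nat.lt_ceil, ← hn]
      exact Finset.mem_range.mp hk
    have h1 : exp (-ε * |sobs - (k : ℝ)|) = exp (-(ε * sobs)) * exp ε ^ k := by
      rw [abs_of_pos (sub_pos.mpr hk'), ← Real.exp_nat_mul, ← Real.exp_add]
      congr 1
      ring
    simp only [hfdef]
    rw [h1, hx, mul_pow]
    ring
  have hhigh : ∀ k : ℕ, f (k + (m + 1)) =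
      (exp (-θ) * (ε / 2) * exp (ε * sobs)) *
        (y ^ (k + (m + 1)) / (Nat.factorial (k + (m + 1)) : ℝ)) := by
    intro k
    have hk' : sobs ≤ ((k + (m + 1) : ℕ) : ℝ) := by
      rw [← Nat.ceil_le, ← hn]
      omega
    have h1 : exp (-ε * |sobs - ((k + (m + 1) : ℕ) : ℝ)|) =
        exp (ε * sobs) * exp (-ε) ^ (k + (m + 1)) := by
      rw [abs_of_nonpos (sub_nonpos.mpr hk'), ← Real.exp_nat_mul, ← Real.exp_add]
      congr 1
      ring
    simp only [hfdef]
    rw [h1, hy, mul_pow]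
    ring
  have hsum := htail.mul_left (exp (-θ) * (ε / 2) * exp (ε * sobs))
  simp only [← hhigh] at hsum
  have htot := ((hasSum_nat_add_iff (f := f) (m + 1)).mp hsum).tsum_eq
  rw [Finset.sum_congr rfl hlow, ← Finset.mul_sum] at htot
  rw [htot, hC]
  have e1 : exp (-(β + 1) * θ) = exp (-β * θ) * exp (-θ) := by
    rw [← Real.exp_add]
    congr 1
    ring
  have e2 : exp (x - ε * sobs) = exp x * exp (-(ε * sobs)) := by
    rw [← Real.exp_add, sub_eq_add_neg]
  have e3 : exp (y + ε * sobs) = exp y * exp (ε * sobs) := Real.exp_add _ _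
  have hG : Gamma α ≠ 0 := (Real.Gamma_pos_of_pos hα).ne'
  rw [e1, e2, e3, Real.exp_neg x, Real.exp_neg y]
  have ex := Real.exp_ne_zero x
  have ey := Real.exp_ne_zero y
  field_simp
  ring
end
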